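/- Let 2 ≤ m < N be real numbers and let f : ℝ → ℝ be continuous with f(t) = 0 for t ≤ 0, and suppose there exist constants C > 0, δ > 0, t₀ > 0 such that 0 ≤ f(t) ≤ C·t^(m−1+δ) for all 0 < t ≤ t₀. Let w : (0,∞) → ℝ be continuously differentiable with w(r) > 0 and w′(r) < 0 for all r > 0 and w(r) → 0 as r → ∞, and suppose that for every r > 0 the function ρ ↦ ρ^(N−1)·|w′(ρ)|^(m−2)·w′(ρ) is differentiable at r with derivative equal to r^(N−1)·(w(r)^(m−1) − f(w(r))). Then there exists a constant C₀ > 0 such that lim_{r→∞} w(r)·r^((N−1)/(m(m−1)))·exp((1/(m−1))^(1/m)·r) = C₀. -/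

import Mathlib

open Real Filter Topology Set

lemma aux_mono {F F' : ℝ → ℝ} {R : ℝ} (h : ∀ r ≥ R, HasDerivAt F (F' r) r)
    (h0 : ∀ r ≥ R, 0 ≤ F' r) : MonotoneOn F (Ici R) := by
  apply monotoneOn_of_deriv_nonneg (convex_Ici R)
  · intro x hx
    exact (h x hx).continuousAt.continuousWithinAt
  · intro x hx
    rw [interior_Ici] at hx
    exact (h x (le_of_lt hx)).differentiableAt.differentiableWithinAt
  · intro x hx
    rw [interior_Ici] at hx
    rw [(h x (le_of_lt hx)).deriv]
    exact h0 x (le_of_lt hx)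

lemma aux_conv {F F' T T' : ℝ → ℝ} {R : ℝ} (h : ∀ r ≥ R, HasDerivAt F (F' r) r)
    (hT : ∀ r ≥ R, HasDerivAt T (T' r) r) (hFT : ∀ r ≥ R, |F' r| ≤ - T' r)
    (hT0 : Tendsto T atTop (𝓝 0)) : ∃ l, Tendsto F atTop (𝓝 l) := by
  have m1 : MonotoneOn (fun r => F r - T r) (Ici R) :=
    aux_mono (fun r hr => (h r hr).sub (hT r hr))
      (fun r hr => by have := abs_le.1 (hFT r hr); linarith)
  have m2 : MonotoneOn (fun r => - F r - T r) (Ici R) :=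
    aux_mono (fun r hr => (h r hr).neg.sub (hT r hr))
      (fun r hr => by have := abs_le.1 (hFT r hr); linarith)
  have m3 : MonotoneOn (fun r => - T r) (Ici R) :=
    aux_mono (fun r hr => (hT r hr).neg)
      (fun r hr => by have := abs_nonneg (F' r); have := hFT r hr; linarith)
  have hTpos : ∀ r ≥ R, 0 ≤ T r := by
    intro r hr
    refine le_of_tendsto hT0 ?_
    filter_upwards [eventually_ge_atTop r] with s hs
    have := m3 (show r ∈ Ici R from hr) (show s ∈ Ici R from hr.le.trans hs) hs
    simp only at this
    linarith
  have mono : Monotone (fun r => F (max r R) - T (max r R)) := by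
    intro x y hxy
    exact m1 (mem_Ici.2 (le_max_right _ _)) (mem_Ici.2 (le_max_right _ _)) (max_le_max_right R hxy)
  have bdd : BddAbove (range (fun r => F (max r R) - T (max r R))) := by
    refine ⟨F R + T R, ?_⟩
    rintro _ ⟨r, rfl⟩
    have h1 := m2 (show R ∈ Ici R from self_mem_Ici) (show max r R ∈ Ici R from mem_Ici.2 (le_max_right _ _))
      (le_max_right _ _)
    have h2 := hTpos (max r R) (le_max_right _ _)
    simp only at h1 ⊢
    linarith
  have lim := tendsto_atTop_ciSup mono bdd
  refine ⟨_, (lim.add hT0).congr' ?_⟩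
  filter_upwards [eventually_ge_atTop R] with r hr
  rw [max_eq_left hr]; ring

lemma aux_growth {Z Z' E : ℝ → ℝ} {R c : ℝ} (hc : 0 < c)
    (h : ∀ r ≥ R, HasDerivAt Z (Z' r) r)
    (hZ : ∀ r ≥ R, c * Z r - E r ≤ Z' r) (hE : AntitoneOn E (Ici R))
    {r₁ : ℝ} (hr₁ : R ≤ r₁) (hbig : E r₁ / c < Z r₁) : Tendsto Z atTop atTop := by
  have m1 : MonotoneOn (fun r => (Z r - E r₁ / c) * exp (- c * r)) (Ici r₁) := by
    refine aux_mono (F' := fun r => Z' r * exp (-c * r) + (Z r - E r₁ / c) *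
      (exp (-c * r) * (-c * 1))) (fun r hr => ?_) (fun r hr => ?_)
    · exact ((h r (hr₁.trans hr)).sub_const _).mul (((hasDerivAt_id r).const_mul (-c)).exp)
    · have h1 := hZ r (hr₁.trans hr)
      have h2 := hE (show r₁ ∈ Ici R from hr₁) (show r ∈ Ici R from hr₁.trans hr) hr
      have h3 : c * (E r₁ / c) = E r₁ := by field_simp
      have : Z' r * exp (-c * r) + (Z r - E r₁ / c) * (exp (-c * r) * (-c * 1))
        = exp (-c * r) * (Z' r - c * Z r + c * (E r₁ / c)) := by ring
      rw [this, h3]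
      apply mul_nonneg (exp_pos _).le
      linarith
  set k := (Z r₁ - E r₁ / c) * exp (- c * r₁) with hk
  have hkpos : 0 < k := mul_pos (by linarith) (exp_pos _)
  have t1 : Tendsto (fun r => k * exp (c * r) + E r₁ / c) atTop atTop := by
    apply tendsto_atTop_add_const_right
    apply Tendsto.const_mul_atTop hkpos
    exact tendsto_exp_atTop.comp (tendsto_id.const_mul_atTop hc)
  refine tendsto_atTop_mono' _ ?_ t1
  filter_upwards [eventually_ge_atTop r₁] with r hr
  have := m1 (show r₁ ∈ Ici r₁ from self_mem_Ici) (show r ∈ Ici r₁ from hr) hr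
  simp only at this
  have h4 : exp (-c * r) * exp (c * r) = 1 := by rw [← exp_add]; simp
  have h5 := mul_le_mul_of_nonneg_right this (exp_pos (c * r)).le
  rw [mul_assoc (Z r - _), h4] at h5
  linarith

lemma aux_bern {q u : ℝ} (hq : 0 < q) (hq1 : q ≤ 1) (hu : -1 < u) :
    |(1 + u) ^ q - 1 - q * u| ≤ u ^ 2 := by
  have h1 := rpow_one_add_le_one_add_mul_self hu.le hq.le hq1
  have h2 := rpow_one_add_le_one_add_mul_self hu.le (p := 1 - q) (by linarith) (by linarith)
  have h0 : 0 < 1 + u := by linarith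
  have h3 : (1 + u) ^ q * (1 + u) ^ (1 - q) = 1 + u := by
    rw [← Real.rpow_add h0]; simp
  have hp : 0 < (1 + u) ^ q := Real.rpow_pos_of_pos h0 _
  have h4 : 1 + u ≤ (1 + u) ^ q * (1 + (1 - q) * u) := by
    calc 1 + u = _ := h3.symm
      _ ≤ _ := mul_le_mul_of_nonneg_left h2 hp.le
  have h5 : 0 < 1 + (1 - q) * u := by nlinarith
  rw [abs_le]
  constructor
  · have : 1 + q * u - u ^ 2 ≤ (1 + u) ^ q := by
      by_contra hcon
      push Not at hcon
      have h6 := mul_lt_mul_of_pos_right hcon h5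
      have h7 : q ≤ 1 + (1 - q) * u := by nlinarith
      have h8 : (1 + q * u - u ^ 2) * (1 + (1 - q) * u)
        = 1 + u + u ^ 2 * (q * (1 - q) - (1 + (1 - q) * u)) := by ring
      have h9 : u ^ 2 * (q * (1 - q) - (1 + (1 - q) * u)) ≤ 0 := by
        apply mul_nonpos_of_nonneg_of_nonpos (sq_nonneg u)
        nlinarith
      linarith
    linarith
  · nlinarith [sq_nonneg u]

lemma aux_noblow {Y g : ℝ → ℝ} {q c n R : ℝ} (hq : 0 < q) (hc : 0 < c) (hR : 0 < R)
    (hY : ∀ r ≥ R, HasDerivAt Y (c * (Y r * Y r ^ q - 1) - n / r * Y r + c * g r) r)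
    (hg : ∀ r ≥ R, 0 ≤ g r)
    (hlim : Tendsto Y atTop atTop) : False := by
  obtain ⟨R1, hR1⟩ := (((hlim.eventually_ge_atTop 4).and (eventually_ge_atTop R)).and
    (eventually_ge_atTop (4 * n / c))).exists_forall_of_atTop
  have m1 : MonotoneOn (fun r => - (Y r ^ (-q)) - (q * c / 2) * r) (Ici R1) := by
    refine aux_mono (F' := fun r => -((c * (Y r * Y r ^ q - 1) - n / r * Y r + c * g r) * (-q) *
      Y r ^ (-q - 1)) - q * c / 2 * 1) (fun r hr => ?_) (fun r hr => ?_)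
    · obtain ⟨⟨h1, h2⟩, h3⟩ := hR1 r hr
      exact ((hY r h2).rpow_const (Or.inl (by linarith))).neg.sub
        ((hasDerivAt_id r).const_mul _)
    · obtain ⟨⟨h1, h2⟩, h3⟩ := hR1 r hr
      have hr0 : 0 < r := by linarith
      have hg0 := hg r h2
      have hnr : n / r ≤ c / 4 := by
        rw [div_le_iff₀ hr0]; rw [div_le_iff₀ hc] at h3; linarith
      have hP : 1 ≤ Y r ^ q := Real.one_le_rpow (by linarith) hq.le
      have hY0 : 0 < Y r := by linarith
      have e1 : Y r ^ (-q - 1) * (Y r * Y r ^ q) = 1 := by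
        rw [Real.rpow_sub hY0, Real.rpow_neg hY0.le, Real.rpow_one]
        have : 0 < Y r ^ q := by linarith
        field_simp
      have hpos : 0 < Y r ^ (-q - 1) := Real.rpow_pos_of_pos hY0 _
      have key : c / 2 * (Y r * Y r ^ q) ≤ c * (Y r * Y r ^ q - 1) - n / r * Y r + c * g r := by
        have k1 : n / r * Y r ≤ c / 4 * (Y r * Y r ^ q) := by
          apply mul_le_mul hnr _ hY0.le (by positivity)
          nlinarith
        have k2 : 4 ≤ Y r * Y r ^ q := by nlinarith
        nlinarith [mul_nonneg hc.le hg0]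
      have := mul_le_mul_of_nonneg_left key (mul_pos hq hpos).le
      have e2 : q * Y r ^ (-q - 1) * (c / 2 * (Y r * Y r ^ q)) = q * c / 2 := by
        calc _ = q * c / 2 * (Y r ^ (-q - 1) * (Y r * Y r ^ q)) := by ring
          _ = _ := by rw [e1, mul_one]
      rw [e2] at this
      nlinarith
  have hlim2 : Tendsto (fun r => (q * c / 2) * r) atTop atTop :=
    tendsto_id.const_mul_atTop (by positivity)
  obtain ⟨r, hr1, hr2⟩ := ((hlim2.eventually_gt_atTop
    (Y R1 ^ (-q) + (q * c / 2) * R1)).and (eventually_ge_atTop R1)).exists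
  have := m1 (show R1 ∈ Ici R1 from self_mem_Ici) (show r ∈ Ici R1 from hr2) hr2
  simp only at this
  have hp : 0 < Y r ^ (-q) := Real.rpow_pos_of_pos (by linarith [(hR1 r hr2).1.1]) _
  linarith

lemma aux_bound {Y g ε : ℝ → ℝ} {q c n R : ℝ} (hq : 0 < q) (hc : 0 < c) (hn : 0 < n) (hR : 0 < R)
    (hRn : 4 * n / c ≤ R) (hYpos : ∀ r ≥ R, 0 < Y r)
    (hY : ∀ r ≥ R, HasDerivAt Y (c * (Y r * Y r ^ q - 1) - n / r * Y r + c * g r) r)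
    (hg : ∀ r ≥ R, 0 ≤ g r) (hgε : ∀ r ≥ R, n / r + c * g r ≤ ε r)
    (hε : AntitoneOn ε (Ici R)) : ∀ r ≥ R, |Y r - 1| ≤ 2 / c * ε r := by
  have hεpos : ∀ r ≥ R, 0 ≤ ε r := fun r hr => by
    have h1 := hgε r hr
    have h2 := hg r hr
    have h3 : 0 < r := by linarith
    have : 0 ≤ n / r + c * g r := by positivity
    linarith
  intro r₁ hr₁
  by_contra hcon
  push Not at hcon
  have hZlim : Tendsto (fun r => (Y r - 1) ^ 2) atTop atTop := by
    refine aux_growth (E := fun r => 2 / c * ε r ^ 2) (R := R) hc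
      (fun r hr => ((hY r hr).sub_const 1).pow 2) (fun r hr => ?_) ?_ hr₁ ?_
    · have h1 := hYpos r hr
      have hr0 : 0 < r := by linarith
      have hnr : n / r ≤ c / 4 := by
        rw [div_le_iff₀ hr0]; rw [div_le_iff₀ hc] at hRn; nlinarith
      have hnr0 : 0 < n / r := by positivity
      have hg0 := hg r hr
      have hge := hgε r hr
      set u := Y r - 1 with hu
      have hYu : Y r = 1 + u := by rw [hu]; ring
      have hmon : 0 ≤ u * (Y r ^ q - 1) := by
        rcases le_total 1 (Y r) with h | h
        · exact mul_nonneg (by linarith) (by linarith [Real.one_le_rpow h hq.le])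
        · exact mul_nonneg_of_nonpos_of_nonpos (by linarith)
            (by linarith [Real.rpow_le_one h1.le h hq.le])
      set P := Y r ^ q with hP
      have k1 : u ^ 2 ≤ u * (Y r * P - 1) := by
        have : u * (Y r * P - 1) = u ^ 2 + Y r * (u * (P - 1)) := by rw [hYu]; ring
        rw [this]
        nlinarith [mul_nonneg h1.le hmon]
      have k2 : -(|u| * ε r) ≤ u * (c * g r - n / r) := by
        have : |u * (c * g r - n / r)| ≤ |u| * ε r := by
          rw [abs_mul]
          apply mul_le_mul_of_nonneg_left _ (abs_nonneg u)
          have : 0 ≤ c * g r := by positivity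
          rw [abs_le]; constructor <;> linarith
        exact (abs_le.1 this).1
      have k3 : 2 * (|u| * ε r) ≤ c / 2 * u ^ 2 + 2 / c * ε r ^ 2 := by
        have : c / 2 * u ^ 2 + 2 / c * ε r ^ 2 - 2 * (|u| * ε r)
          = (2 / c) * (c / 2 * |u| - ε r) ^ 2 := by
          rw [← sq_abs u]; field_simp; ring
        have h2 : 0 ≤ (2 / c) * (c / 2 * |u| - ε r) ^ 2 := by positivity
        linarith
      have k4 : n / r * u ^ 2 ≤ c / 4 * u ^ 2 := mul_le_mul_of_nonneg_right hnr (sq_nonneg u)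
      have k5 := mul_le_mul_of_nonneg_left k1 hc.le
      simp only [Nat.cast_ofNat, Nat.add_one_sub_one, pow_one]
      have e : 2 * u * (c * (Y r * P - 1) - n / r * Y r + c * g r)
         = 2 * (c * (u * (Y r * P - 1))) - 2 * (n / r * u ^ 2) + 2 * (u * (c * g r - n / r)) := by
        have : n / r * Y r = n / r * (1 + u) := by rw [← hYu]
        rw [this]; ring
      rw [e]
      nlinarith
    · intro x hx y hy hxy
      have := hε hx hy hxy
      have h0 := hεpos y hy
      change 2 / c * ε y ^ 2 ≤ 2 / c * ε x ^ 2
      gcongr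
    · have h0 := hεpos r₁ hr₁
      rw [← sq_abs (Y r₁ - 1)]
      have h1 : (2 / c * ε r₁) ^ 2 < |Y r₁ - 1| ^ 2 :=
        pow_lt_pow_left₀ hcon (by positivity) (by norm_num)
      have h2 : 2 / c * ε r₁ ^ 2 / c ≤ (2 / c * ε r₁) ^ 2 := by
        have : (2 / c * ε r₁) ^ 2 - 2 / c * ε r₁ ^ 2 / c = 2 * (ε r₁ / c) ^ 2 := by
          field_simp; ring
        have : 0 ≤ 2 * (ε r₁ / c) ^ 2 := by positivity
        linarith
      linarith
  refine aux_noblow hq hc hR hY hg ?_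
  rw [tendsto_atTop]
  intro b
  filter_upwards [hZlim.eventually_gt_atTop ((|b| + 1) ^ 2), eventually_ge_atTop R] with r h1 h2
  have h3 := hYpos r h2
  have h4 : |b| + 1 < |Y r - 1| := by
    rw [← sq_abs (Y r - 1)] at h1
    exact lt_of_pow_lt_pow_left₀ 2 (abs_nonneg _) h1
  rcases lt_abs.1 h4 with h | h
  · linarith [le_abs_self b]
  · linarith [abs_nonneg b]

set_option maxHeartbeats 2000000 in
lemma aux_core {Y g w : ℝ → ℝ} {q c n lam a κ δ A R : ℝ} (hq : 0 < q) (hq1 : q ≤ 1)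
    (hc : 0 < c) (hn : 0 < n) (hlam : 0 < lam) (hκ : 0 < κ) (hδ : 0 < δ) (hA : 0 < A)
    (hR : 0 < R) (e1 : κ * c * (1 + q) = lam * q) (e2 : κ * n = a)
    (hYpos : ∀ r ≥ R, 0 < Y r)
    (hY : ∀ r ≥ R, HasDerivAt Y (c * (Y r * Y r ^ q - 1) - n / r * Y r + c * g r) r)
    (hw : ∀ r ≥ R, HasDerivAt w (-(lam * Y r ^ q * w r)) r)
    (hwpos : ∀ r ≥ R, 0 < w r) (hw0 : Tendsto w atTop (𝓝 0))
    (hg : ∀ r ≥ R, 0 ≤ g r) (hgA : ∀ r ≥ R, g r ≤ A * w r ^ δ) :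
    ∃ l, Tendsto (fun r => Real.log (w r) + lam * r + a * Real.log r) atTop (𝓝 l) := by
  set ε : ℝ → ℝ := fun r => n / r + c * (A * w r ^ δ) with hε
  have hwanti : ∀ x ≥ R, ∀ y ≥ x, w y ≤ w x := by
    have m1 : MonotoneOn (fun r => - w r) (Ici R) :=
      aux_mono (fun r hr => (hw r hr).neg) (fun r hr => by
        have := Real.rpow_pos_of_pos (hYpos r hr) q
        have := hwpos r hr
        rw [neg_neg]; positivity)
    intro x hx y hy
    have := m1 (show x ∈ Ici R from hx) (show y ∈ Ici R from hx.le.trans hy) hy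
    simp only at this
    linarith
  have hεanti : AntitoneOn ε (Ici R) := by
    intro x hx y hy hxy
    have hx' : R ≤ x := hx
    have hx0 : 0 < x := by linarith
    have h1 := hwanti x hx y hxy
    have h2 := hwpos y hy
    simp only [hε]
    gcongr
  have hwδ : Tendsto (fun r => w r ^ δ) atTop (𝓝 0) := by
    have := hw0.rpow_const (p := δ) (Or.inr hδ.le)
    rwa [Real.zero_rpow hδ.ne'] at this
  have hninv : ∀ k : ℝ, Tendsto (fun r : ℝ => k / r) atTop (𝓝 0) := fun k =>
    tendsto_const_nhds.div_atTop tendsto_id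
  have hε0 : Tendsto ε atTop (𝓝 0) := by
    have := (hninv n).add ((hwδ.const_mul A).const_mul c)
    simpa using this
  set R' := max R (4 * n / c) with hR'
  have hRR' : R ≤ R' := le_max_left _ _
  have hb : ∀ r ≥ R', |Y r - 1| ≤ 2 / c * ε r := by
    refine aux_bound hq hc hn (hR.trans_le hRR') (le_max_right _ _)
      (fun r hr => hYpos r (hRR'.trans hr)) (fun r hr => hY r (hRR'.trans hr))
      (fun r hr => hg r (hRR'.trans hr)) (fun r hr => ?_)
      (hεanti.mono (Ici_subset_Ici.2 hRR'))
    have := hgA r (hRR'.trans hr)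
    simp only [hε]
    gcongr
  have hY1 : Tendsto (fun r => Y r - 1) atTop (𝓝 0) := by
    apply squeeze_zero_norm' (a := fun r => 2 / c * ε r)
    · filter_upwards [eventually_ge_atTop R'] with r hr
      exact hb r hr
    · simpa using hε0.const_mul (2 / c)
  have hev1 : ∀ᶠ r in atTop, |Y r - 1| < 1 / 2 := by
    have := hY1.abs
    rw [abs_zero] at this
    exact this.eventually_lt_const (by norm_num)
  have hev2 : ∀ᶠ r in atTop, w r ^ δ < 1 := hwδ.eventually_lt_const (by norm_num)
  obtain ⟨R2, hR2⟩ := ((hev1.and hev2).and (eventually_ge_atTop R')).exists_forall_of_atTop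
  -- constants
  set B : ℝ := 4 / c ^ 2 * (2 * n ^ 2 + 2 * (c * A) ^ 2) with hB
  have hBpos : 0 < B := by positivity
  have ha : 0 < a := by rw [← e2]; positivity
  set K : ℝ := (lam + κ * c * (q + 2) + a) * B + a + κ * c * A with hK
  have hKpos : 0 < K := by positivity
  have hF : ∃ l, Tendsto (fun r => Real.log (w r) + lam * r + a * Real.log r + κ * Y r)
      atTop (𝓝 l) := by
    refine aux_conv (R := R2)
      (F' := fun r => -(lam * Y r ^ q * w r) / w r + lam * 1 + a * r⁻¹ +
        κ * (c * (Y r * Y r ^ q - 1) - n / r * Y r + c * g r))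
      (T := fun r => K * r⁻¹ + K * (4 / (δ * lam)) * w r ^ δ)
      (T' := fun r => K * (-(r ^ 2)⁻¹) + K * (4 / (δ * lam)) *
        (-(lam * Y r ^ q * w r) * δ * w r ^ (δ - 1))) ?_ ?_ ?_ ?_
    · intro r hr
      obtain ⟨⟨-, -⟩, h3⟩ := hR2 r hr
      have hrR : R ≤ r := hRR'.trans h3
      have hr0 : 0 < r := by linarith
      exact ((((hw r hrR).log (hwpos r hrR).ne').add ((hasDerivAt_id r).const_mul lam)).add
        ((Real.hasDerivAt_log hr0.ne').const_mul a)).add ((hY r hrR).const_mul κ)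
    · intro r hr
      obtain ⟨⟨-, -⟩, h3⟩ := hR2 r hr
      have hrR : R ≤ r := hRR'.trans h3
      have hr0 : 0 < r := by linarith
      exact ((hasDerivAt_inv hr0.ne').const_mul K).add
        (((hw r hrR).rpow_const (Or.inl (hwpos r hrR).ne')).const_mul _)
    · intro r hr
      obtain ⟨⟨h1, h2⟩, h3⟩ := hR2 r hr
      have hrR : R ≤ r := hRR'.trans h3
      have hr0 : 0 < r := by linarith
      have hw1 := hwpos r hrR
      have hbr := hb r h3
      have hg0 := hg r hrR
      have hgr := hgA r hrR
      set u := Y r - 1 with hu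
      have hYu : Y r = 1 + u := by rw [hu]; ring
      obtain ⟨hu1, hu2⟩ := abs_lt.1 h1
      have hbern := aux_bern hq hq1 (u := u) (by linarith)
      rw [← hYu] at hbern
      set P := Y r ^ q with hP
      set ρ := P - 1 - q * u with hρ
      have hPρ : P = 1 + q * u + ρ := by rw [hρ]; ring
      have hus : u ^ 2 ≤ 1 / 4 := by nlinarith
      have hP4 : 1 / 4 ≤ P := by
        have := (abs_le.1 hbern).1
        rw [hPρ]
        nlinarith
      set W := w r ^ δ with hW
      have hW0 : 0 < W := Real.rpow_pos_of_pos hw1 _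
      set s := r⁻¹ with hs
      have hs0 : 0 < s := by positivity
      have hWd : w r * w r ^ (δ - 1) = W := by
        rw [hW, Real.rpow_sub hw1, Real.rpow_one]; field_simp
      have husq : u ^ 2 ≤ B * (s ^ 2 + W) := by
        have e : ε r = n * s + c * A * W := by
          simp only [hε, hs, hW]; rw [div_eq_mul_inv]; ring
        have i1 : u ^ 2 ≤ (2 / c * ε r) ^ 2 := by
          rw [← sq_abs u]
          exact pow_le_pow_left₀ (abs_nonneg u) hbr 2
        have i2 : (ε r) ^ 2 ≤ 2 * (n * s) ^ 2 + 2 * (c * A * W) ^ 2 := by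
          rw [e]; nlinarith [sq_nonneg (n * s - c * A * W)]
        have i3 : W ^ 2 ≤ W := by nlinarith
        have i4 : 2 * (n * s) ^ 2 + 2 * (c * A * W) ^ 2
            ≤ (2 * n ^ 2 + 2 * (c * A) ^ 2) * (s ^ 2 + W) := by
          have j1 : (c * A) ^ 2 * W ^ 2 ≤ (c * A) ^ 2 * W :=
            mul_le_mul_of_nonneg_left i3 (sq_nonneg _)
          have j2 : 0 ≤ n ^ 2 * W := by positivity
          have j3 : 0 ≤ (c * A) ^ 2 * s ^ 2 := by positivity
          have j4 : (2 * n ^ 2 + 2 * (c * A) ^ 2) * (s ^ 2 + W) = 2 * (n ^ 2 * s ^ 2)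
            + 2 * (n ^ 2 * W) + 2 * ((c * A) ^ 2 * s ^ 2) + 2 * ((c * A) ^ 2 * W) := by ring
          rw [j4, mul_pow, mul_pow (c * A)]
          linarith
        calc u ^ 2 ≤ (2 / c * ε r) ^ 2 := i1
          _ = 4 / c ^ 2 * (ε r) ^ 2 := by ring
          _ ≤ 4 / c ^ 2 * ((2 * n ^ 2 + 2 * (c * A) ^ 2) * (s ^ 2 + W)) :=
            mul_le_mul_of_nonneg_left (i2.trans i4) (by positivity)
          _ = B * (s ^ 2 + W) := by rw [hB]; ring
      have eF : -(lam * P * w r) / w r + lam * 1 + a * s +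
          κ * (c * (Y r * P - 1) - n / r * Y r + c * g r)
          = -lam * ρ + κ * c * (q * u ^ 2 + (1 + u) * ρ) - a * (u * s) + κ * c * g r := by
        have f1 : -(lam * P * w r) / w r = - (lam * P) := by field_simp
        have f2 : n / r * Y r = n * s * (1 + u) := by rw [← hYu, hs, div_eq_mul_inv]
        rw [f1, f2, hYu, hPρ]
        rw [← e2]
        linear_combination u * e1
      have eT : -(K * (-(r ^ 2)⁻¹) + K * (4 / (δ * lam)) * (-(lam * P * w r) * δ * w r ^ (δ - 1)))
          = K * s ^ 2 + K * (4 * P) * W := by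
        rw [← hWd, hs]; field_simp; ring
      change |_| ≤ _
      rw [eT, eF]
      have b1 : |-lam * ρ| ≤ lam * u ^ 2 := by
        rw [abs_mul, abs_neg, abs_of_pos hlam]
        exact mul_le_mul_of_nonneg_left hbern hlam.le
      have b2 : |κ * c * (q * u ^ 2 + (1 + u) * ρ)| ≤ κ * c * ((q + 2) * u ^ 2) := by
        rw [abs_mul, abs_of_pos (mul_pos hκ hc)]
        apply mul_le_mul_of_nonneg_left _ (mul_pos hκ hc).le
        have b3 : |(1 + u) * ρ| ≤ 2 * u ^ 2 := by
          rw [abs_mul]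
          apply mul_le_mul _ hbern (abs_nonneg _) (by norm_num)
          rw [abs_le]; constructor <;> linarith
        have b4 : |q * u ^ 2| = q * u ^ 2 := abs_of_nonneg (by positivity)
        have := abs_add_le (q * u ^ 2) ((1 + u) * ρ)
        linarith
      have b5 : |a * (u * s)| ≤ a * (u ^ 2 + s ^ 2) := by
        rw [abs_mul, abs_of_pos ha]
        apply mul_le_mul_of_nonneg_left _ ha.le
        rw [abs_le]; constructor <;> nlinarith [sq_nonneg (u + s), sq_nonneg (u - s)]
      have b6 : |κ * c * g r| ≤ κ * c * (A * W) := by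
        rw [abs_of_nonneg (by positivity)]
        exact mul_le_mul_of_nonneg_left hgr (mul_pos hκ hc).le
      have tri : |-lam * ρ + κ * c * (q * u ^ 2 + (1 + u) * ρ) - a * (u * s) + κ * c * g r|
          ≤ |-lam * ρ| + |κ * c * (q * u ^ 2 + (1 + u) * ρ)| + |a * (u * s)| + |κ * c * g r| := by
        refine (abs_add_le _ _).trans (add_le_add_left ?_ _)
        refine (abs_sub _ _).trans (add_le_add_left ?_ _)
        exact abs_add_le _ _
      have b7 : (lam + κ * c * (q + 2) + a) * u ^ 2
          ≤ (lam + κ * c * (q + 2) + a) * (B * (s ^ 2 + W)) :=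
        mul_le_mul_of_nonneg_left husq (by positivity)
      have b8 : K * W ≤ K * (4 * P) * W := by
        apply mul_le_mul_of_nonneg_right _ hW0.le
        nlinarith
      have b9 : 0 ≤ a * W := by positivity
      have b10 : 0 ≤ κ * c * A * s ^ 2 := by positivity
      have b11 : K * (s ^ 2 + W) = (lam + κ * c * (q + 2) + a) * (B * (s ^ 2 + W))
        + a * s ^ 2 + a * W + κ * c * A * s ^ 2 + κ * c * A * W := by rw [hK]; ring
      linarith
    · have h1 := ((hninv 1).const_mul K).add (hwδ.const_mul (K * (4 / (δ * lam))))
      simpa using h1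
  obtain ⟨l, hl⟩ := hF
  refine ⟨l - κ * (0 + 1), ?_⟩
  refine (hl.sub ((hY1.add_const 1).const_mul κ)).congr (fun r => ?_)
  ring

/-- Proposition 1(ii), precise exponential asymptotics of a radial ground state of
`Δ_m w - w^(m-1) + f(w) = 0` in `ℝ^N`. -/
theorem stmt_1 (m N : ℝ) (hm : 2 ≤ m) (hmN : m < N)
    (f : ℝ → ℝ) (hf_cont : Continuous f) (hf_zero : ∀ t ≤ (0:ℝ), f t = 0)
    (C δ t₀ : ℝ) (hC : 0 < C) (hδ : 0 < δ) (ht₀ : 0 < t₀)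
    (hf_bound : ∀ t : ℝ, 0 < t → t ≤ t₀ → 0 ≤ f t ∧ f t ≤ C * t ^ (m - 1 + δ))
    (w w' : ℝ → ℝ)
    (hw_deriv : ∀ r > (0:ℝ), HasDerivAt w (w' r) r)
    (hw'_cont : ContinuousOn w' (Ioi 0))
    (hw_pos : ∀ r > (0:ℝ), 0 < w r)
    (hw'_neg : ∀ r > (0:ℝ), w' r < 0)
    (hw_lim : Tendsto w atTop (𝓝 0))
    (hODE : ∀ r > (0:ℝ),
      HasDerivAt (fun ρ : ℝ => ρ ^ (N - 1) * |w' ρ| ^ (m - 2) * w' ρ)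
        (r ^ (N - 1) * ((w r) ^ (m - 1) - f (w r))) r) :
    ∃ C₀ > (0:ℝ), Tendsto
      (fun r => w r * r ^ ((N - 1) / (m * (m - 1))) * Real.exp ((1 / (m - 1)) ^ (1 / m) * r))
      atTop (𝓝 C₀) := by
  have hμ : 1 ≤ m - 1 := by linarith
  have hμ0 : 0 < m - 1 := by linarith
  have hm0 : 0 < m := by linarith
  have hn : 0 < N - 1 := by linarith
  set lam : ℝ := (1 / (m - 1)) ^ (1 / m) with hlamdef
  have hlam : 0 < lam := Real.rpow_pos_of_pos (by positivity) _
  have hlm : lam ^ m = 1 / (m - 1) := by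
    rw [hlamdef, ← Real.rpow_mul (by positivity)]
    rw [one_div_mul_cancel hm0.ne', Real.rpow_one]
  have hlc : lam ^ (m - 1) = ((m - 1) * lam)⁻¹ := by
    rw [Real.rpow_sub hlam, hlm, Real.rpow_one]; field_simp
  obtain ⟨R, hR⟩ := ((hw_lim.eventually_lt_const ht₀).and
    (eventually_ge_atTop (1 : ℝ))).exists_forall_of_atTop
  have hR0 : 0 < R := by linarith [(hR R le_rfl).2]
  have hpos : ∀ r ≥ R, 0 < r := fun r hr => by linarith [(hR r hr).2]
  have hxpos : ∀ r > 0, 0 < -w' r / w r := fun r hr =>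
    div_pos (by linarith [hw'_neg r hr]) (hw_pos r hr)
  have hP : ∀ r > 0, ((m - 1) * lam * (-w' r / w r) ^ (m - 1)) ^ (1 / (m - 1))
      = (-w' r / w r) / lam := by
    intro r hr
    have hx := hxpos r hr
    have : (m - 1) * lam * (-w' r / w r) ^ (m - 1) = ((-w' r / w r) / lam) ^ (m - 1) := by
      rw [Real.div_rpow hx.le hlam.le, hlc]; field_simp
    rw [this, ← Real.rpow_mul (by positivity), mul_one_div_cancel hμ0.ne', Real.rpow_one]
  obtain ⟨l, hl⟩ := aux_core (Y := fun r => (m - 1) * lam * (-w' r / w r) ^ (m - 1))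
    (g := fun r => f (w r) / w r ^ (m - 1)) (w := w) (q := 1 / (m - 1)) (c := (m - 1) * lam)
    (n := N - 1) (lam := lam) (a := (N - 1) / (m * (m - 1))) (κ := 1 / (m * (m - 1)))
    (δ := δ) (A := C) (R := R) (by positivity) (by rw [div_le_one hμ0]; exact hμ)
    (by positivity) hn hlam (by positivity) hδ hC hR0 (by field_simp; ring) (by field_simp)
    (fun r hr => by
      have := Real.rpow_pos_of_pos (hxpos r (hpos r hr)) (m - 1)
      positivity)
    (fun r hr => by
      have hr0 := hpos r hr
      have hw0 := hw_pos r hr0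
      have hx := hxpos r hr0
      rw [hP r hr0]
      have habs : ∀ ρ > 0, ρ ^ (N - 1) * |w' ρ| ^ (m - 2) * w' ρ =
          - (ρ ^ (N - 1) * ((-w' ρ / w ρ) ^ (m - 1) * w ρ ^ (m - 1))) := by
        intro ρ hρ
        have h1 := hw'_neg ρ hρ
        have h2 := hw_pos ρ hρ
        rw [← Real.mul_rpow (hxpos ρ hρ).le h2.le, div_mul_cancel₀ _ h2.ne', abs_of_neg h1]
        have h3 : 0 < - w' ρ := by linarith
        have : (-w' ρ) ^ (m - 1) = (-w' ρ) ^ (m - 2) * (-w' ρ) := by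
          rw [← Real.rpow_add_one h3.ne']; congr 1; ring
        rw [this]; ring
      have hD := ((hasDerivAt_id r).rpow_const (p := N - 1) (Or.inl hr0.ne')).mul
        ((hw_deriv r hr0).rpow_const (p := m - 1) (Or.inl hw0.ne'))
      have hrn : 0 < r ^ (N - 1) := Real.rpow_pos_of_pos hr0 _
      have hwn : 0 < w r ^ (m - 1) := Real.rpow_pos_of_pos hw0 _
      have hQ := ((hODE r hr0).div hD (mul_pos hrn hwn).ne').const_mul (-((m - 1) * lam))
      refine (hQ.congr_of_eventuallyEq ?_).congr_deriv ?_
      · filter_upwards [lt_mem_nhds hr0] with ρ hρ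
        have h1 : 0 < ρ ^ (N - 1) := Real.rpow_pos_of_pos hρ _
        have h2 : 0 < w ρ ^ (m - 1) := Real.rpow_pos_of_pos (hw_pos ρ hρ) _
        simp only [Pi.div_apply, Pi.mul_apply, id]
        rw [habs ρ hρ]
        field_simp
      · simp only [Pi.mul_apply, id]
        rw [habs r hr0, Real.rpow_sub hr0 (N - 1), Real.rpow_sub hw0 (m - 1),
          Real.rpow_one, Real.rpow_one]
        have hw'x : w' r = - ((-w' r / w r) * w r) := by field_simp
        generalize -w' r / w r = x at *
        rw [hw'x]
        generalize r ^ (N - 1) = a at *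
        generalize w r ^ (m - 1) = b at *
        generalize x ^ (m - 1) = X at *
        field_simp
        ring)
    (fun r hr => by
      have hr0 := hpos r hr
      have hw0 := hw_pos r hr0
      rw [hP r hr0]
      convert hw_deriv r hr0 using 1
      field_simp)
    (fun r hr => hw_pos r (hpos r hr)) hw_lim
    (fun r hr => by
      have hw0 := hw_pos r (hpos r hr)
      exact div_nonneg (hf_bound _ hw0 (hR r hr).1.le).1 (Real.rpow_pos_of_pos hw0 _).le)
    (fun r hr => by
      have hw0 := hw_pos r (hpos r hr)
      rw [div_le_iff₀ (Real.rpow_pos_of_pos hw0 _), mul_assoc, ← Real.rpow_add hw0,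
        add_comm δ]
      exact (hf_bound _ hw0 (hR r hr).1.le).2)
  refine ⟨Real.exp l, Real.exp_pos l, ?_⟩
  refine ((Real.continuous_exp.tendsto l).comp hl).congr' ?_
  filter_upwards [eventually_ge_atTop R] with r hr
  have hr0 := hpos r hr
  simp only [Function.comp]
  rw [Real.exp_add, Real.exp_add, Real.exp_log (hw_pos r hr0), Real.rpow_def_of_pos hr0,
    mul_comm (Real.log r)]
  ring
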